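/- For a fixed vector θ ∈ ℝ^r and a random vector Z ∈ ℝ^r with log-concave probability density, if g : ℝ^r × ℝ^r → ℝ is concave, then the function h(θ) = P(g(θ, Z) ≥ 0) is log-concave on ℝ^r. -/

import Mathlib

open MeasureTheory Set

/-!
Call `ν` a Prékopa–Leindler measure if `f x ^ a * g y ^ b ≤ h (a • x + b • y)` for all `x, y`
implies `(∫ f) ^ a * (∫ g) ^ b ≤ ∫ h`. On the line, once `f` and `g` are scaled to have the same
supremum, the superlevel sets satisfy `a • {f > s} + b • {g > s} ⊆ {h > s}`, so the one-dimensional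
Brunn–Minkowski inequality and the layer-cake formula give the arithmetic, hence the geometric,
inequality. The class is stable under products, linear images and scaling, so it contains every
Haar measure; it is also stable under log-concave densities. Applied to indicators of the sections
of the convex set `{(θ, z) | 0 ≤ g θ z}`, the inequality for the law of `Z` is the log-concavity of
`P(g(θ, Z) ≥ 0)`.
-/

open scoped ENNReal Pointwise

section WeightedMeans

variable {a b : ℝ}

theorem ennreal_rpow_mul_rpow_self (ha : 0 ≤ a) (hb : 0 ≤ b) (hab : a + b = 1) (u : ℝ≥0∞) :
    u ^ a * u ^ b = u := by
  rw [← ENNReal.rpow_add_of_nonneg _ _ ha hb, hab, ENNReal.rpow_one]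

theorem ennreal_geom_mean_le_arith_mean2_weighted (ha : 0 < a) (hb : 0 < b) (hab : a + b = 1)
    (u v : ℝ≥0∞) : u ^ a * v ^ b ≤ ENNReal.ofReal a * u + ENNReal.ofReal b * v := by
  have young := ENNReal.young_inequality (u ^ a) (v ^ b) (Real.HolderConjugate.inv_inv ha hb hab)
  rwa [ENNReal.rpow_rpow_inv ha.ne', ENNReal.rpow_rpow_inv hb.ne', ENNReal.ofReal_inv_of_pos ha,
    ENNReal.ofReal_inv_of_pos hb, ENNReal.div_eq_inv_mul, ENNReal.div_eq_inv_mul, inv_inv,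
    inv_inv] at young

theorem ennreal_div_rpow_mul_div_rpow (ha : 0 ≤ a) (hb : 0 ≤ b) {M N : ℝ≥0∞} (hM₀ : M ≠ 0)
    (hM_top : M ≠ ∞) (u v : ℝ≥0∞) :
    (u / M) ^ a * (v / N) ^ b = u ^ a * v ^ b / (M ^ a * N ^ b) := by
  rw [ENNReal.div_rpow_of_nonneg _ _ ha, ENNReal.div_rpow_of_nonneg _ _ hb,
    ENNReal.mul_div_mul_comm (.inl (by simp [hM₀, hM_top])) (.inl (by finiteness))]

end WeightedMeans

section BrunnMinkowskiLine

variable {A B : Set ℝ} {a b : ℝ}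

theorem volume_add_volume_le_of_isGreatest_of_isLeast (hB : MeasurableSet B) (ha : IsGreatest A a)
    (hb : IsLeast B b) : volume A + volume B ≤ volume (A + B) := by
  have inter_subset : (A + {b}) ∩ ({a} + B) ⊆ {a + b} := by
    rintro _ ⟨⟨x, hx, _, rfl, rfl⟩, ⟨_, rfl, y, hy, hxy⟩⟩
    exact le_antisymm (add_le_add_left (ha.2 hx) _)
      ((add_le_add_right (hb.2 hy) _).trans_eq hxy)
  have aedisjoint : AEDisjoint volume (A + {b}) ({a} + B) :=
    measure_mono_null inter_subset (measure_singleton _)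
  have measurableSet_right : MeasurableSet ({a} + B) := by
    simpa only [singleton_add, image_add_left] using measurable_const_add (-a) hB
  calc volume A + volume B = volume (A + {b}) + volume ({a} + B) := by
        simp only [add_singleton, singleton_add, image_add_right, image_add_left,
          measure_preimage_add_right, measure_preimage_add]
    _ = volume ((A + {b}) ∪ ({a} + B)) :=
        (measure_union₀ measurableSet_right.nullMeasurableSet aedisjoint).symm
    _ ≤ volume (A + B) := measure_mono <| union_subset
        (add_subset_add_left (singleton_subset_iff.2 hb.1))
        (add_subset_add_right (singleton_subset_iff.2 ha.1))

theorem volume_add_volume_le_volume_add (hA : MeasurableSet A) (hB : MeasurableSet B)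
    (hA₀ : A.Nonempty) (hB₀ : B.Nonempty) : volume A + volume B ≤ volume (A + B) := by
  obtain ⟨x, hx⟩ := hA₀
  obtain ⟨y, hy⟩ := hB₀
  rw [hA.measure_eq_iSup_isCompact, hB.measure_eq_iSup_isCompact]
  simp only [iSup_and']
  refine ENNReal.biSup_add_biSup_le' ⟨∅, empty_subset _, isCompact_empty⟩
    ⟨∅, empty_subset _, isCompact_empty⟩ ?_
  rintro K ⟨hKA, hK⟩ L ⟨hLB, hL⟩
  -- `K` and `L` may be empty; adjoining a point makes their extrema available.
  obtain ⟨k, hk⟩ := (hK.insert x).exists_isGreatest (insert_nonempty x K)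
  obtain ⟨l, hl⟩ := (hL.insert y).exists_isLeast (insert_nonempty y L)
  calc volume K + volume L ≤ volume (insert x K) + volume (insert y L) := by
        gcongr <;> exact subset_insert _ _
    _ ≤ volume (insert x K + insert y L) :=
        volume_add_volume_le_of_isGreatest_of_isLeast (hL.insert y).measurableSet hk hl
    _ ≤ volume (A + B) := measure_mono <|
        add_subset_add (insert_subset hx hKA) (insert_subset hy hLB)

theorem volume_weighted_add_le (hA : MeasurableSet A) (hB : MeasurableSet B) (hA₀ : A.Nonempty)
    (hB₀ : B.Nonempty) (ha : 0 ≤ a) (hb : 0 ≤ b) :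
    ENNReal.ofReal a * volume A + ENNReal.ofReal b * volume B ≤ volume (a • A + b • B) := by
  have volume_smul {c : ℝ} (hc : 0 ≤ c) (S : Set ℝ) :
      volume (c • S) = ENNReal.ofReal c * volume S := by
    rw [Measure.addHaar_smul_of_nonneg _ hc, Module.finrank_self, pow_one]
  rw [← volume_smul ha, ← volume_smul hb]
  exact volume_add_volume_le_volume_add (hA.const_smul₀ a) (hB.const_smul₀ b) hA₀.smul_set
    hB₀.smul_set

end BrunnMinkowskiLine

section LayerCake

variable {α : Type*} [MeasurableSpace α] (μ : Measure α) {f : α → ℝ≥0∞}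

theorem volume_restrict_Ioi_setOf_ofReal_lt (u : ℝ≥0∞) :
    volume.restrict (Ioi (0 : ℝ)) {s | ENNReal.ofReal s < u} = u := by
  rw [Measure.restrict_apply (measurableSet_lt ENNReal.measurable_ofReal measurable_const)]
  rcases eq_or_ne u ∞ with rfl | hu
  · simp only [ENNReal.ofReal_lt_top, ofPred_true, univ_inter, Real.volume_Ioi]
  · have : {s | ENNReal.ofReal s < u} ∩ Ioi 0 = Ioo 0 u.toReal := by
      ext s
      exact and_comm.trans (and_congr_right fun hs : 0 < s ↦
        ENNReal.ofReal_lt_iff_lt_toReal hs.le hu)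
    rw [this, Real.volume_Ioo, sub_zero, ENNReal.ofReal_toReal hu]

theorem lintegral_eq_lintegral_measure_setOf_ofReal_lt [SFinite μ] (hf : Measurable f) :
    ∫⁻ x, f x ∂μ = ∫⁻ s in Ioi (0 : ℝ), μ {x | ENNReal.ofReal s < f x} := by
  let subgraph : Set (ℝ × α) := {p | ENNReal.ofReal p.1 < f p.2}
  have measurableSet_subgraph : MeasurableSet subgraph :=
    measurableSet_lt measurable_fst.ennreal_ofReal (hf.comp measurable_snd)
  calc ∫⁻ x, f x ∂μ
      = ∫⁻ x, volume.restrict (Ioi (0 : ℝ)) {s | ENNReal.ofReal s < f x} ∂μ := by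
        simp only [volume_restrict_Ioi_setOf_ofReal_lt]
    _ = ((volume.restrict (Ioi (0 : ℝ))).prod μ) subgraph :=
        (Measure.prod_apply_symm measurableSet_subgraph).symm
    _ = ∫⁻ s in Ioi (0 : ℝ), μ {x | ENNReal.ofReal s < f x} :=
        Measure.prod_apply measurableSet_subgraph

theorem measurable_measure_setOf_ofReal_lt (f : α → ℝ≥0∞) :
    Measurable fun s : ℝ ↦ μ {x | ENNReal.ofReal s < f x} :=
  Antitone.measurable fun _ _ hst ↦ measure_mono fun _ ↦ (ENNReal.ofReal_le_ofReal hst).trans_lt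

theorem lintegral_eq_iSup_lintegral_min_natCast (hf : Measurable f) :
    ∫⁻ x, f x ∂μ = ⨆ n : ℕ, ∫⁻ x, min (f x) n ∂μ := by
  rw [← lintegral_iSup (fun n ↦ hf.min measurable_const)
    fun m n hmn x ↦ min_le_min_left _ (Nat.cast_le.2 hmn)]
  refine lintegral_congr fun x ↦ ?_
  rw [← inf_iSup_eq, ENNReal.iSup_natCast, inf_top_eq]

end LayerCake

section PrekopaLeindlerLine

variable {f g h : ℝ → ℝ≥0∞} {a b : ℝ}

theorem lintegral_weighted_add_le_of_iSup_eq (hf : Measurable f) (hg : Measurable g)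
    (hh : Measurable h) (ha : 0 < a) (hb : 0 < b) (hab : a + b = 1)
    (hsup : ⨆ x, f x = ⨆ x, g x) (H : ∀ x y, f x ^ a * g y ^ b ≤ h (a • x + b • y)) :
    ENNReal.ofReal a * (∫⁻ x, f x) + ENNReal.ofReal b * ∫⁻ x, g x ≤ ∫⁻ x, h x := by
  let superlevel (k : ℝ → ℝ≥0∞) (s : ℝ) : Set ℝ := {x | ENNReal.ofReal s < k x}
  have measurable_volume (k : ℝ → ℝ≥0∞) : Measurable fun s ↦ volume (superlevel k s) :=
    measurable_measure_setOf_ofReal_lt volume k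
  have smul_add_smul_subset (s : ℝ) :
      a • superlevel f s + b • superlevel g s ⊆ superlevel h s := by
    rintro _ ⟨_, ⟨x, hx, rfl⟩, _, ⟨y, hy, rfl⟩, rfl⟩
    refine lt_of_lt_of_le ?_ (H x y)
    rw [← ennreal_rpow_mul_rpow_self ha.le hb.le hab (ENNReal.ofReal s)]
    exact ENNReal.mul_lt_mul (ENNReal.rpow_lt_rpow hx ha) (ENNReal.rpow_lt_rpow hy hb)
  have superlevel_eq_empty {k : ℝ → ℝ≥0∞} {s : ℝ} (hs : ⨆ x, k x ≤ ENNReal.ofReal s) :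
      superlevel k s = ∅ :=
    eq_empty_of_forall_notMem fun x ↦ ((le_iSup k x).trans hs).not_gt
  have volume_superlevel_le (s : ℝ) : ENNReal.ofReal a * volume (superlevel f s) +
      ENNReal.ofReal b * volume (superlevel g s) ≤ volume (superlevel h s) := by
    rcases lt_or_ge (ENNReal.ofReal s) (⨆ x, f x) with hs | hs
    · have nonempty_f : (superlevel f s).Nonempty := lt_iSup_iff.1 hs
      have nonempty_g : (superlevel g s).Nonempty := lt_iSup_iff.1 (hs.trans_eq hsup)
      exact (volume_weighted_add_le (measurableSet_lt measurable_const hf)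
        (measurableSet_lt measurable_const hg) nonempty_f nonempty_g ha.le hb.le).trans
          (measure_mono (smul_add_smul_subset s))
    · simp only [superlevel_eq_empty hs, superlevel_eq_empty (hsup.symm.trans_le hs),
        measure_empty, mul_zero, add_zero, zero_le]
  rw [lintegral_eq_lintegral_measure_setOf_ofReal_lt volume hf,
    lintegral_eq_lintegral_measure_setOf_ofReal_lt volume hg,
    lintegral_eq_lintegral_measure_setOf_ofReal_lt volume hh,
    ← lintegral_const_mul _ (measurable_volume f), ← lintegral_const_mul _ (measurable_volume g),
    ← lintegral_add_left ((measurable_volume f).const_mul _)]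
  exact lintegral_mono volume_superlevel_le

theorem lintegral_rpow_mul_lintegral_rpow_le_of_iSup_ne_top (hf : Measurable f)
    (hg : Measurable g) (hh : Measurable h) (ha : 0 < a) (hb : 0 < b) (hab : a + b = 1)
    (hf_top : ⨆ x, f x ≠ ∞) (hg_top : ⨆ x, g x ≠ ∞)
    (H : ∀ x y, f x ^ a * g y ^ b ≤ h (a • x + b • y)) :
    (∫⁻ x, f x) ^ a * (∫⁻ x, g x) ^ b ≤ ∫⁻ x, h x := by
  set M := ⨆ x, f x with hM
  set N := ⨆ x, g x with hN
  rcases eq_or_ne M 0 with hM₀ | hM₀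
  · have hf₀ (x : ℝ) : f x = 0 := ENNReal.iSup_eq_zero.1 hM₀ x
    simp only [hf₀, lintegral_zero, ENNReal.zero_rpow_of_pos ha, zero_mul, zero_le]
  rcases eq_or_ne N 0 with hN₀ | hN₀
  · have hg₀ (x : ℝ) : g x = 0 := ENNReal.iSup_eq_zero.1 hN₀ x
    simp only [hg₀, lintegral_zero, ENNReal.zero_rpow_of_pos hb, mul_zero, zero_le]
  set c := M ^ a * N ^ b
  have hc₀ : c ≠ 0 := mul_ne_zero (by simp [hM₀, hf_top]) (by simp [hN₀, hg_top])
  have hc_top : c ≠ ∞ := by finiteness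
  have div_rpow_mul_div_rpow (u v : ℝ≥0∞) : (u / M) ^ a * (v / N) ^ b = u ^ a * v ^ b / c :=
    ennreal_div_rpow_mul_div_rpow ha.le hb.le hM₀ hf_top u v
  have iSup_div_eq : ⨆ x, f x / M = ⨆ x, g x / N := by
    rw [← ENNReal.iSup_div, ← ENNReal.iSup_div, ← hM, ← hN, ENNReal.div_self hM₀ hf_top,
      ENNReal.div_self hN₀ hg_top]
  have lintegral_div {k : ℝ → ℝ≥0∞} (hk : Measurable k) (d : ℝ≥0∞) :
      ∫⁻ x, k x / d = (∫⁻ x, k x) / d := by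
    simp only [div_eq_mul_inv, lintegral_mul_const _ hk]
  suffices scaled_le : (∫⁻ x, f x) ^ a * (∫⁻ x, g x) ^ b / c ≤ (∫⁻ x, h x) / c by
    rwa [ENNReal.div_le_iff hc₀ hc_top, ENNReal.div_mul_cancel hc₀ hc_top] at scaled_le
  calc (∫⁻ x, f x) ^ a * (∫⁻ x, g x) ^ b / c
      = (∫⁻ x, f x / M) ^ a * (∫⁻ x, g x / N) ^ b := by
        rw [lintegral_div hf, lintegral_div hg, div_rpow_mul_div_rpow]
    _ ≤ ENNReal.ofReal a * (∫⁻ x, f x / M) + ENNReal.ofReal b * ∫⁻ x, g x / N :=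
        ennreal_geom_mean_le_arith_mean2_weighted ha hb hab _ _
    _ ≤ ∫⁻ x, h x / c :=
        lintegral_weighted_add_le_of_iSup_eq (hf.div_const M) (hg.div_const N) (hh.div_const c)
          ha hb hab iSup_div_eq fun x y ↦
            (div_rpow_mul_div_rpow _ _).trans_le (ENNReal.div_le_div_right (H x y) c)
    _ = (∫⁻ x, h x) / c := lintegral_div hh c

end PrekopaLeindlerLine

section LogConcave

variable {E : Type*} [AddCommMonoid E] [Module ℝ E]

/-- A function with values in `[0, ∞]` is log-concave if its logarithm, with values in `[-∞, ∞]`,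
is concave. The weights are positive because `0 ^ 0 = 1`. -/
def LogConcave (φ : E → ℝ≥0∞) : Prop :=
  ∀ ⦃a b : ℝ⦄, 0 < a → 0 < b → a + b = 1 → ∀ x y, φ x ^ a * φ y ^ b ≤ φ (a • x + b • y)

theorem logConcave_ofReal {f : E → ℝ} (hf₀ : ∀ x, 0 ≤ f x)
    (hf : ∀ x y, ∀ t : ℝ, 0 ≤ t → t ≤ 1 → f x ^ t * f y ^ (1 - t) ≤ f (t • x + (1 - t) • y)) :
    LogConcave fun x ↦ ENNReal.ofReal (f x) := by
  intro a b ha hb hab x y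
  obtain rfl : b = 1 - a := eq_sub_of_add_eq' hab
  rw [ENNReal.ofReal_rpow_of_nonneg (hf₀ x) ha.le, ENNReal.ofReal_rpow_of_nonneg (hf₀ y) hb.le,
    ← ENNReal.ofReal_mul (Real.rpow_nonneg (hf₀ x) a)]
  exact ENNReal.ofReal_le_ofReal (hf x y a ha.le (sub_nonneg.1 hb.le))

theorem LogConcave.toReal_rpow_mul_le {φ : E → ℝ≥0∞} (hφ : LogConcave φ) (hφ_top : ∀ x, φ x ≠ ∞)
    (x y : E) {t : ℝ} (ht₀ : 0 ≤ t) (ht₁ : t ≤ 1) :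
    (φ x).toReal ^ t * (φ y).toReal ^ (1 - t) ≤ (φ (t • x + (1 - t) • y)).toReal := by
  rcases ht₀.eq_or_lt with rfl | ht₀
  · simp
  rcases ht₁.eq_or_lt with rfl | ht₁
  · simp
  rw [ENNReal.toReal_rpow, ENNReal.toReal_rpow, ← ENNReal.toReal_mul]
  exact ENNReal.toReal_mono (hφ_top _) (hφ ht₀ (sub_pos.2 ht₁) (add_sub_cancel t 1) x y)

theorem LogConcave.quasiconcaveOn_univ {φ : E → ℝ≥0∞} (hφ : LogConcave φ) :
    QuasiconcaveOn ℝ univ φ := by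
  refine convex_univ.quasiconcaveOn_of_convex_ge fun u ↦ convex_iff_forall_pos.2 ?_
  intro x hx y hy a b ha hb hab
  calc u = u ^ a * u ^ b := (ennreal_rpow_mul_rpow_self ha.le hb.le hab u).symm
    _ ≤ φ x ^ a * φ y ^ b := by gcongr <;> assumption
    _ ≤ φ (a • x + b • y) := hφ ha hb hab x y

end LogConcave

section Measurability

theorem exists_measurable_ge_ae_eq {α β : Type*} [MeasurableSpace α] [MeasurableSpace β]
    [Preorder β] [OrderTop β] {μ : Measure α} {f : α → β} (hf : AEMeasurable f μ) :
    ∃ f', Measurable f' ∧ f ≤ f' ∧ f =ᵐ[μ] f' := by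
  classical
  let exceptional : Set α := toMeasurable μ {x | f x ≠ hf.mk f x}
  have eq_mk {x : α} (hx : x ∉ exceptional) : f x = hf.mk f x :=
    not_not.1 fun h ↦ hx (subset_toMeasurable μ _ h)
  have measure_exceptional : μ exceptional = 0 := (measure_toMeasurable _).trans hf.ae_eq_mk
  refine ⟨exceptional.piecewise (fun _ ↦ ⊤) (hf.mk f),
    measurable_const.piecewise (measurableSet_toMeasurable _ _) hf.measurable_mk, fun x ↦ ?_, ?_⟩
  · by_cases hx : x ∈ exceptional
    · simp only [piecewise_eq_of_mem _ _ _ hx, le_top]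
    · simp only [piecewise_eq_of_notMem _ _ _ hx, eq_mk hx, le_refl]
  · filter_upwards [measure_eq_zero_iff_ae_notMem.1 measure_exceptional] with x hx
    rw [piecewise_eq_of_notMem _ _ _ hx, eq_mk hx]

theorem aemeasurable_of_quasiconcaveOn_univ {V β : Type*} [NormedAddCommGroup V] [NormedSpace ℝ V]
    [FiniteDimensional ℝ V] [MeasurableSpace V] [BorelSpace V] (ν : Measure V) [ν.IsAddHaarMeasure]
    [LinearOrder β] [TopologicalSpace β] [OrderTopology β] [SecondCountableTopology β]
    [MeasurableSpace β] [BorelSpace β] {φ : V → β} (hφ : QuasiconcaveOn ℝ univ φ) :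
    AEMeasurable φ ν := by
  have nullMeasurableSet_superlevel (u : β) : NullMeasurableSet (φ ⁻¹' Ici u) ν := by
    have : φ ⁻¹' Ici u = {x ∈ univ | u ≤ φ x} := (sep_univ (p := fun x ↦ u ≤ φ x)).symm
    exact this ▸ (hφ u).nullMeasurableSet ν
  have nullMeasurable : NullMeasurable φ ν :=
    measurable_of_Ici (δ := NullMeasurableSpace V ν) nullMeasurableSet_superlevel
  exact nullMeasurable.aemeasurable

end Measurability

section PrekopaLeindler

variable {V W : Type*} [AddCommMonoid V] [Module ℝ V] [MeasurableSpace V]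
  [AddCommMonoid W] [Module ℝ W] [MeasurableSpace W]

/-- The measure `ν` satisfies the Prékopa–Leindler inequality, the functional form of
log-concavity of `ν`. -/
def PrekopaLeindler (ν : Measure V) : Prop :=
  ∀ ⦃a b : ℝ⦄, 0 < a → 0 < b → a + b = 1 →
    ∀ ⦃f g h : V → ℝ≥0∞⦄, Measurable f → Measurable g → Measurable h →
      (∀ x y, f x ^ a * g y ^ b ≤ h (a • x + b • y)) →
        (∫⁻ x, f x ∂ν) ^ a * (∫⁻ x, g x ∂ν) ^ b ≤ ∫⁻ x, h x ∂ν

theorem prekopaLeindler_volume_real : PrekopaLeindler (volume : Measure ℝ) := by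
  intro a b ha hb hab f g h hf hg hh H
  have iSup_rpow (u : ℕ → ℝ≥0∞) {p : ℝ} (hp : 0 < p) : (⨆ n, u n) ^ p = ⨆ n, u n ^ p :=
    (ENNReal.orderIsoRpow p hp).map_iSup u
  have iSup_min_ne_top (k : ℝ → ℝ≥0∞) (n : ℕ) : ⨆ x, min (k x) n ≠ ∞ :=
    ((iSup_le fun x ↦ min_le_right _ _).trans_lt (ENNReal.natCast_lt_top n)).ne
  rw [lintegral_eq_iSup_lintegral_min_natCast _ hf, lintegral_eq_iSup_lintegral_min_natCast _ hg,
    iSup_rpow _ ha, iSup_rpow _ hb]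
  simp only [ENNReal.iSup_mul, ENNReal.mul_iSup]
  refine iSup_le fun m ↦ iSup_le fun n ↦ ?_
  refine lintegral_rpow_mul_lintegral_rpow_le_of_iSup_ne_top (hf.min measurable_const)
    (hg.min measurable_const) hh ha hb hab (iSup_min_ne_top f _) (iSup_min_ne_top g _)
    fun x y ↦ (H x y).trans' ?_
  gcongr <;> exact min_le_left _ _

theorem prekopaLeindler_dirac (x : V) : PrekopaLeindler (Measure.dirac x) := by
  intro a b _ _ hab f g h hf hg hh H
  simpa only [lintegral_dirac' _ hf, lintegral_dirac' _ hg, lintegral_dirac' _ hh,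
    Convex.combo_self hab] using H x x

namespace PrekopaLeindler

variable {ν : Measure V}

theorem map (hν : PrekopaLeindler ν) {L : V →ₗ[ℝ] W} (hL : Measurable L) :
    PrekopaLeindler (ν.map L) := by
  intro a b ha hb hab f g h hf hg hh H
  rw [lintegral_map hf hL, lintegral_map hg hL, lintegral_map hh hL]
  refine hν ha hb hab (hf.comp hL) (hg.comp hL) (hh.comp hL) fun x y ↦ ?_
  simpa only [map_add, map_smul, Function.comp_apply] using H (L x) (L y)

theorem smul (hν : PrekopaLeindler ν) (c : ℝ≥0∞) : PrekopaLeindler (c • ν) := by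
  intro a b ha hb hab f g h hf hg hh H
  simp only [lintegral_smul_measure, smul_eq_mul]
  rw [ENNReal.mul_rpow_of_nonneg _ _ ha.le, ENNReal.mul_rpow_of_nonneg _ _ hb.le,
    mul_mul_mul_comm, ennreal_rpow_mul_rpow_self ha.le hb.le hab]
  gcongr
  exact hν ha hb hab hf hg hh H

theorem prod {ρ : Measure W} [SFinite ρ] (hν : PrekopaLeindler ν) (hρ : PrekopaLeindler ρ) :
    PrekopaLeindler (ν.prod ρ) := by
  intro a b ha hb hab f g h hf hg hh H
  rw [lintegral_prod _ hf.aemeasurable, lintegral_prod _ hg.aemeasurable,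
    lintegral_prod _ hh.aemeasurable]
  refine hν ha hb hab hf.lintegral_prod_right' hg.lintegral_prod_right' hh.lintegral_prod_right'
    fun x y ↦ ?_
  exact hρ ha hb hab (hf.comp measurable_prodMk_left) (hg.comp measurable_prodMk_left)
    (hh.comp measurable_prodMk_left) fun z w ↦ H (x, z) (y, w)

theorem lintegral_rpow_mul_le (hν : PrekopaLeindler ν) {a b : ℝ} (ha : 0 < a) (hb : 0 < b)
    (hab : a + b = 1) {f g h : V → ℝ≥0∞} (hh : AEMeasurable h ν)
    (H : ∀ x y, f x ^ a * g y ^ b ≤ h (a • x + b • y)) :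
    (∫⁻ x, f x ∂ν) ^ a * (∫⁻ x, g x ∂ν) ^ b ≤ ∫⁻ x, h x ∂ν := by
  obtain ⟨f', hf', hf'_le, hf'_eq⟩ := exists_measurable_le_lintegral_eq ν f
  obtain ⟨g', hg', hg'_le, hg'_eq⟩ := exists_measurable_le_lintegral_eq ν g
  obtain ⟨h', hh', le_hh', hh'_ae⟩ := exists_measurable_ge_ae_eq hh
  rw [hf'_eq, hg'_eq, lintegral_congr_ae hh'_ae]
  refine hν ha hb hab hf' hg' hh' fun x y ↦ ?_
  calc f' x ^ a * g' y ^ b ≤ f x ^ a * g y ^ b := by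
        gcongr
        exacts [hf'_le x, hg'_le y]
    _ ≤ h' (a • x + b • y) := (H x y).trans (le_hh' _)

theorem withDensity (hν : PrekopaLeindler ν) {φ : V → ℝ≥0∞} (hφ : LogConcave φ)
    (hφ_meas : AEMeasurable φ ν) : PrekopaLeindler (ν.withDensity φ) := by
  intro a b ha hb hab f g h hf hg hh H
  simp only [lintegral_withDensity_eq_lintegral_mul₀ hφ_meas hf.aemeasurable,
    lintegral_withDensity_eq_lintegral_mul₀ hφ_meas hg.aemeasurable,
    lintegral_withDensity_eq_lintegral_mul₀ hφ_meas hh.aemeasurable]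
  refine hν.lintegral_rpow_mul_le ha hb hab (hφ_meas.mul hh.aemeasurable) fun x y ↦ ?_
  simp only [Pi.mul_apply]
  rw [ENNReal.mul_rpow_of_nonneg _ _ ha.le, ENNReal.mul_rpow_of_nonneg _ _ hb.le, mul_mul_mul_comm]
  exact mul_le_mul' (hφ ha hb hab x y) (H x y)

theorem measure_rpow_mul_le (hν : PrekopaLeindler ν) {a b : ℝ} (ha : 0 < a) (hb : 0 < b)
    (hab : a + b = 1) {A B C : Set V} (hA : NullMeasurableSet A ν) (hB : NullMeasurableSet B ν)
    (hC : ∀ x ∈ A, ∀ y ∈ B, a • x + b • y ∈ C) : ν A ^ a * ν B ^ b ≤ ν C := by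
  rw [← measure_toMeasurable C, ← lintegral_indicator_one₀ hA, ← lintegral_indicator_one₀ hB,
    ← lintegral_indicator_one (measurableSet_toMeasurable ν C)]
  refine hν.lintegral_rpow_mul_le ha hb hab
    (measurable_one.indicator (measurableSet_toMeasurable ν C)).aemeasurable fun x y ↦ ?_
  by_cases hx : x ∈ A
  · by_cases hy : y ∈ B
    · have hxy := subset_toMeasurable ν C (hC x hx y hy)
      simp only [indicator_of_mem hx, indicator_of_mem hy, indicator_of_mem hxy, Pi.one_apply,
        ENNReal.one_rpow, mul_one, le_refl]
    · simp only [indicator_of_notMem hy, ENNReal.zero_rpow_of_pos hb, mul_zero, zero_le]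
  · simp only [indicator_of_notMem hx, ENNReal.zero_rpow_of_pos ha, zero_mul, zero_le]

theorem logConcave_measure_section (hν : PrekopaLeindler ν) {E : Type*} [AddCommMonoid E]
    [Module ℝ E] {C : Set (E × V)} (hC : Convex ℝ C)
    (hC_meas : ∀ θ, NullMeasurableSet (Prod.mk θ ⁻¹' C) ν) :
    LogConcave fun θ ↦ ν (Prod.mk θ ⁻¹' C) :=
  fun _ _ ha hb hab θ₁ θ₂ ↦ hν.measure_rpow_mul_le ha hb hab (hC_meas θ₁) (hC_meas θ₂)
    fun _ hx _ hy ↦ hC hx hy ha.le hb.le hab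

end PrekopaLeindler

theorem prekopaLeindler_volume_fin (n : ℕ) : PrekopaLeindler (volume : Measure (Fin n → ℝ)) := by
  induction n with
  | zero =>
    rw [Measure.volume_pi_eq_dirac default]
    exact prekopaLeindler_dirac default
  | succ n ih =>
    let cons := (Fin.consLinearEquiv ℝ fun _ : Fin (n + 1) ↦ ℝ).toLinearMap
    have measurePreserving_cons : MeasurePreserving cons := by
      convert (volume_preserving_piFinSuccAbove (fun _ : Fin (n + 1) ↦ ℝ) 0).symm using 1
      exact congrArg DFunLike.coe (Fin.insertNthEquiv_zero fun _ : Fin (n + 1) ↦ ℝ).symm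
    rw [← measurePreserving_cons.map_eq]
    exact (prekopaLeindler_volume_real.prod ih).map measurePreserving_cons.measurable

end PrekopaLeindler

section FiniteDimensional

variable {V : Type*} [NormedAddCommGroup V] [NormedSpace ℝ V] [FiniteDimensional ℝ V]
  [MeasurableSpace V] [BorelSpace V] (ν : Measure V) [ν.IsAddHaarMeasure]

theorem prekopaLeindler_addHaar : PrekopaLeindler ν := by
  let e : (Fin (Module.finrank ℝ V) → ℝ) ≃L[ℝ] V :=
    .ofFinrankEq (Module.finrank_fin_fun ℝ)
  have : (volume.map e).IsAddHaarMeasure := e.isAddHaarMeasure_map volume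
  rw [Measure.isAddLeftInvariant_eq_smul ν (volume.map e)]
  exact ((prekopaLeindler_volume_fin _).map (L := e.toLinearMap) e.continuous.measurable).smul _

theorem prekopa_logconcave_probability_general {Ω E : Type*} [MeasurableSpace Ω] {μ : Measure Ω}
    [AddCommMonoid E] [Module ℝ E] {Z : Ω → V} (hZ : AEMeasurable Z μ) {φ : V → ℝ≥0∞}
    (hφ : LogConcave φ) (hdens : μ.map Z = ν.withDensity φ) {C : Set (E × V)}
    (hC : Convex ℝ C) : LogConcave fun θ ↦ μ {ω | (θ, Z ω) ∈ C} := by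
  have prekopaLeindler_law : PrekopaLeindler (μ.map Z) := by
    rw [hdens]
    exact (prekopaLeindler_addHaar ν).withDensity hφ
      (aemeasurable_of_quasiconcaveOn_univ ν hφ.quasiconcaveOn_univ)
  have convex_section (θ : E) : Convex ℝ (Prod.mk θ ⁻¹' C) := by
    intro x hx y hy a b ha hb hab
    simpa only [mem_preimage, Prod.smul_mk, Prod.mk_add_mk, Convex.combo_self hab]
      using hC hx hy ha hb hab
  have nullMeasurableSet_section (θ : E) : NullMeasurableSet (Prod.mk θ ⁻¹' C) (μ.map Z) := by
    rw [hdens]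
    exact ((convex_section θ).nullMeasurableSet ν).mono_ac (withDensity_absolutelyContinuous ν φ)
  have law_section (θ : E) : μ.map Z (Prod.mk θ ⁻¹' C) = μ {ω | (θ, Z ω) ∈ C} :=
    Measure.map_apply₀ hZ (nullMeasurableSet_section θ)
  simpa only [law_section] using
    prekopaLeindler_law.logConcave_measure_section hC nullMeasurableSet_section

end FiniteDimensional

/-- Prékopa's theorem: if `Z` is a random vector in `ℝ^r` whose law has a
log-concave density `f` with respect to Lebesgue measure, and
`g : ℝ^r × ℝ^r → ℝ` is concave, then `h θ = P(g(θ, Z) ≥ 0)` is log-concave. -/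
theorem prekopa_logconcave_probability
    {Ω : Type*} [MeasurableSpace Ω] (μ : Measure Ω) [IsProbabilityMeasure μ]
    (r : ℕ) (Z : Ω → (Fin r → ℝ)) (hZ : Measurable Z)
    (f : (Fin r → ℝ) → ℝ) (hf0 : ∀ x, 0 ≤ f x)
    (hdens : Measure.map Z μ
      = volume.withDensity (fun x => ENNReal.ofReal (f x)))
    (hflc : ∀ x y : Fin r → ℝ, ∀ t : ℝ, 0 ≤ t → t ≤ 1 →
      f x ^ t * f y ^ (1 - t) ≤ f (t • x + (1 - t) • y))
    (g : (Fin r → ℝ) → (Fin r → ℝ) → ℝ)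
    (hg : ConcaveOn ℝ univ (fun p : (Fin r → ℝ) × (Fin r → ℝ) => g p.1 p.2)) :
    ∀ θ₁ θ₂ : Fin r → ℝ, ∀ t : ℝ, 0 ≤ t → t ≤ 1 →
      (μ {ω | 0 ≤ g θ₁ (Z ω)}).toReal ^ t
          * (μ {ω | 0 ≤ g θ₂ (Z ω)}).toReal ^ (1 - t)
        ≤ (μ {ω | 0 ≤ g (t • θ₁ + (1 - t) • θ₂) (Z ω)}).toReal := by
  have convex_superlevel : Convex ℝ {p : (Fin r → ℝ) × (Fin r → ℝ) | 0 ≤ g p.1 p.2} := by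
    simpa only [mem_univ, true_and] using hg.convex_ge 0
  exact fun θ₁ θ₂ _ ↦ (prekopa_logconcave_probability_general volume hZ.aemeasurable
    (logConcave_ofReal hf0 hflc) hdens convex_superlevel).toReal_rpow_mul_le
      (fun _ ↦ measure_ne_top μ _) θ₁ θ₂
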